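/- For all natural numbers k and l and all x, z ∈ F: (-1)^{l+1} Σ_{j=0}^{l+1} [l+1 choose j]_q x^{l+1-j} [k+j+1]_q A*_{k+j}(z) q^{(k+1)(l-j)+1} = (-1)^k Σ_{j=0}^{k+1} [k+1 choose j]_q x^{k+1-j} [l+j+1]_q A_{l+j}([1,-z,-x]) q^{(k-j)(k-j-1)/2 - j}. -/

import Mathlib

open Finset

/-- The q-Pochhammer symbol `(a;q)_n = ∏_{j=0}^{n-1} (1 - a q^j)`. -/
def qPoch {F : Type*} [Field F] (q a : F) (n : ℕ) : F :=
  ∏ j ∈ Finset.range n, (1 - a * q ^ j)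

/-- The q-binomial coefficient `[n choose i]_q`, equal to 0 when `i > n`. -/
def qBinom {F : Type*} [Field F] (q : F) (n i : ℕ) : F :=
  if i ≤ n then qPoch q q n / (qPoch q q i * qPoch q q (n - i)) else 0

/-- The q-integer `[n]_q = (1-q^n)/(1-q)`. -/
def qInt {F : Type*} [Field F] (q : F) (n : ℕ) : F := (1 - q ^ n) / (1 - q)

/-- The q-dual sequence `a*_n = ∑_{i=0}^n (-1)^i [n choose i]_q q^{i(i-1)/2} a_i`. -/
def qDual {F : Type*} [Field F] (q : F) (a : ℕ → F) (n : ℕ) : F :=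
  ∑ i ∈ Finset.range (n + 1), (-1 : F) ^ i * qBinom q n i * q ^ (i.choose 2) * a i
/-- The q-factorial `[n]_q! = ∏_{j=1}^n [j]_q`. -/
def qFact {F : Type*} [Field F] (q : F) (n : ℕ) : F :=
  ∏ j ∈ Finset.range n, qInt q (j + 1)

/-- `[u,v,w]^n = ∑_{i+j+k=n} ([n]_q!/([i]_q![j]_q![k]_q!)) u^i v^j w^k`. -/
def qBracket3 {F : Type*} [Field F] (q : F) (n : ℕ) (u v w : F) : F :=
  ∑ i ∈ Finset.range (n + 1), ∑ j ∈ Finset.range (n + 1 - i),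
    qFact q n / (qFact q i * qFact q j * qFact q (n - i - j)) *
      (u ^ i * v ^ j * w ^ (n - i - j))

/-- `A_n(x) = ∑_{i=0}^n (-1)^i [n choose i]_q q^{i(i-1)/2} a_i x^{n-i}`. -/
def Apoly {F : Type*} [Field F] (q : F) (a : ℕ → F) (n : ℕ) (x : F) : F :=
  ∑ i ∈ Finset.range (n + 1), (-1 : F) ^ i * qBinom q n i * q ^ (i.choose 2) * a i * x ^ (n - i)

/-- `A*_n(x) = ∑_{i=0}^n (-1)^i [n choose i]_q a*_i x^{n-i}`. -/
def AstarPoly {F : Type*} [Field F] (q : F) (a : ℕ → F) (n : ℕ) (x : F) : F :=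
  ∑ i ∈ Finset.range (n + 1), (-1 : F) ^ i * qBinom q n i * qDual q a i * x ^ (n - i)

/-- `A_n([1,-z,-x]) = ∑_{i=0}^n (-1)^i [n choose i]_q q^{i(i-1)/2} a_i [1,-z,-x]^{n-i}`. -/
def ApolyTri {F : Type*} [Field F] (q : F) (a : ℕ → F) (n : ℕ) (z x : F) : F :=
  ∑ i ∈ Finset.range (n + 1), (-1 : F) ^ i * qBinom q n i * q ^ (i.choose 2) * a i *
    qBracket3 q (n - i) 1 (-z) (-x)

section QBinomial

variable {F : Type*} [Field F] {q : F}

lemma qPoch_self_ne_zero (hq : ∀ m : ℕ, 0 < m → q ^ m ≠ 1) (n : ℕ) : qPoch q q n ≠ 0 := by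
  refine prod_ne_zero_iff.mpr fun j _ h => hq (j + 1) j.succ_pos ?_
  rw [pow_succ']
  exact (sub_eq_zero.mp h).symm

lemma qPoch_self_succ (q : F) (n : ℕ) :
    qPoch q q (n + 1) = qPoch q q n * (1 - q ^ (n + 1)) := by
  rw [qPoch, prod_range_succ, ← qPoch, pow_succ']

lemma qFact_eq (q : F) (n : ℕ) : qFact q n = qPoch q q n / (1 - q) ^ n := by
  simp [qFact, qPoch, qInt, prod_div_distrib, pow_succ']

lemma one_sub_ne_zero (hq : ∀ m : ℕ, 0 < m → q ^ m ≠ 1) : 1 - q ≠ 0 := fun h =>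
  hq 1 one_pos (by rw [pow_one, ← sub_eq_zero.mp h])

lemma qFact_ne_zero (hq : ∀ m : ℕ, 0 < m → q ^ m ≠ 1) (n : ℕ) : qFact q n ≠ 0 := by
  rw [qFact_eq]
  exact div_ne_zero (qPoch_self_ne_zero hq n) (pow_ne_zero _ (one_sub_ne_zero hq))

lemma qBinom_of_lt {n i : ℕ} (h : n < i) : qBinom q n i = 0 := if_neg h.not_ge

lemma qBinom_add (q : F) (i j : ℕ) :
    qBinom q (i + j) i = qPoch q q (i + j) / (qPoch q q i * qPoch q q j) := by
  simp [qBinom]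

lemma qBinom_add_eq_qFact (hq : ∀ m : ℕ, 0 < m → q ^ m ≠ 1) (i j : ℕ) :
    qBinom q (i + j) i = qFact q (i + j) / (qFact q i * qFact q j) := by
  have h := one_sub_ne_zero hq
  have hi := qPoch_self_ne_zero hq i
  have hj := qPoch_self_ne_zero hq j
  rw [qBinom_add, qFact_eq, qFact_eq, qFact_eq, pow_add]
  field_simp

lemma qBinom_zero_right (hq : ∀ m : ℕ, 0 < m → q ^ m ≠ 1) (n : ℕ) : qBinom q n 0 = 1 := by
  simp [qBinom, qPoch_self_ne_zero hq n, show qPoch q q 0 = 1 by simp [qPoch]]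

lemma qBinom_self (hq : ∀ m : ℕ, 0 < m → q ^ m ≠ 1) (n : ℕ) : qBinom q n n = 1 := by
  simp [qBinom, qPoch_self_ne_zero hq n, show qPoch q q 0 = 1 by simp [qPoch]]

lemma qBinom_symm_add (q : F) (i j : ℕ) : qBinom q (i + j) i = qBinom q (i + j) j := by
  rw [qBinom_add, add_comm i j, qBinom_add, mul_comm]

lemma qBinom_succ_succ (hq : ∀ m : ℕ, 0 < m → q ^ m ≠ 1) (n i : ℕ) :
    qBinom q (n + 1) (i + 1) = qBinom q n (i + 1) + q ^ (n - i) * qBinom q n i := by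
  rcases lt_trichotomy n i with h | rfl | h
  · simp [qBinom_of_lt h, qBinom_of_lt (Nat.succ_lt_succ h), qBinom_of_lt (h.trans i.lt_succ_self)]
  · simp [qBinom_self hq, qBinom_of_lt n.lt_succ_self]
  · obtain ⟨r, rfl⟩ := Nat.exists_eq_add_of_lt h
    rw [show i + r + 1 + 1 = (i + 1) + (r + 1) by ring, qBinom_add,
      show i + r + 1 = (i + 1) + r by ring, qBinom_add,
      show (i + 1) + r = i + (r + 1) by ring, qBinom_add,
      show i + (r + 1) - i = r + 1 by omega,
      show i + 1 + (r + 1) = (i + (r + 1)) + 1 by ring, qPoch_self_succ q (i + (r + 1)),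
      qPoch_self_succ q i, qPoch_self_succ q r]
    have hi := qPoch_self_ne_zero hq (i + 1)
    have hr := qPoch_self_ne_zero hq (r + 1)
    rw [qPoch_self_succ] at hi hr
    have hi1 := left_ne_zero_of_mul hi
    have hi2 := right_ne_zero_of_mul hi
    have hr1 := left_ne_zero_of_mul hr
    have hr2 := right_ne_zero_of_mul hr
    field_simp
    ring

lemma qInt_mul_qBinom (hq : ∀ m : ℕ, 0 < m → q ^ m ≠ 1) (n i : ℕ) :
    qInt q (n + 1) * qBinom q n i = qInt q (i + 1) * qBinom q (n + 1) (i + 1) := by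
  rcases lt_or_ge n i with h | h
  · simp [qBinom_of_lt h, qBinom_of_lt (Nat.succ_lt_succ h)]
  · obtain ⟨r, rfl⟩ := Nat.exists_eq_add_of_le h
    rw [qBinom_add, show i + r + 1 = (i + 1) + r by ring, qBinom_add,
      show (i + 1) + r = i + r + 1 by ring, qPoch_self_succ q (i + r), qPoch_self_succ q i]
    have h1 := one_sub_ne_zero hq
    have hi := qPoch_self_ne_zero hq (i + 1)
    have hr := qPoch_self_ne_zero hq r
    rw [qPoch_self_succ] at hi
    have hi1 := left_ne_zero_of_mul hi
    have hi2 := right_ne_zero_of_mul hi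
    simp only [qInt]
    field_simp

end QBinomial

section QDifference

variable {F : Type*} [Field F] {q : F}

/-- The `K`-th `q`-difference of a sequence. -/
def qDiff (q : F) (K : ℕ) (f : ℕ → F) : F :=
  ∑ i ∈ range (K + 1), (-1) ^ i * qBinom q K i * q ^ (i.choose 2) * f i

lemma qDiff_succ (hq : ∀ m : ℕ, 0 < m → q ^ m ≠ 1) (K : ℕ) (f : ℕ → F) :
    qDiff q (K + 1) f = qDiff q K f - q ^ K * qDiff q K (fun i => f (i + 1)) := by
  have h : ∀ i ∈ range (K + 1),
      (-1) ^ (i + 1) * qBinom q (K + 1) (i + 1) * q ^ ((i + 1).choose 2) * f (i + 1) =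
      (-1) ^ (i + 1) * qBinom q K (i + 1) * q ^ ((i + 1).choose 2) * f (i + 1) -
        q ^ K * ((-1) ^ i * qBinom q K i * q ^ (i.choose 2) * f (i + 1)) := by
    intro i hi
    obtain ⟨r, rfl⟩ := Nat.exists_eq_add_of_le (Nat.lt_succ_iff.mp (mem_range.mp hi))
    rw [qBinom_succ_succ hq, Nat.choose_succ_succ' i 1, Nat.choose_one_right,
      Nat.add_sub_cancel_left, pow_add, pow_add]
    ring
  rw [qDiff, sum_range_succ', sum_congr rfl h, sum_sub_distrib, ← mul_sum, qBinom_zero_right hq,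
    sub_add_eq_add_sub, qDiff, qDiff]
  congr 1
  rw [sum_range_succ, qBinom_of_lt K.lt_succ_self, sum_range_succ', qBinom_zero_right hq]
  ring

lemma qDiff_succ_qBinom (hq : ∀ m : ℕ, 0 < m → q ^ m ≠ 1) (K L M : ℕ) :
    qDiff q (K + 1) (fun i => qBinom q (L + (K + 1) - i) M) =
      qDiff q K (fun i => qBinom q (L + 1 + K - i) M) -
        q ^ K * qDiff q K (fun i => qBinom q (L + K - i) M) := by
  rw [qDiff_succ hq]
  congr 2
  · funext i
    congr 1
    omega
  · congr 1
    funext i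
    congr 1
    omega

lemma qDiff_qBinom_add (hq : ∀ m : ℕ, 0 < m → q ^ m ≠ 1) (K L r : ℕ) :
    qDiff q K (fun i => qBinom q (L + K - i) (K + r)) = qBinom q L r * q ^ (K * (L - r)) := by
  induction K generalizing L r with
  | zero => simp [qDiff, qBinom_zero_right hq]
  | succ K ih =>
    rw [qDiff_succ_qBinom hq, show K + 1 + r = K + (r + 1) by ring, ih, ih,
      qBinom_succ_succ hq, Nat.add_sub_add_right]
    rcases lt_or_ge r L with h | h
    · obtain ⟨s, rfl⟩ := Nat.exists_eq_add_of_lt h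
      rw [show r + s + 1 - (r + 1) = s by omega, show r + s + 1 - r = s + 1 by omega]
      ring
    · rw [qBinom_of_lt (Nat.lt_succ_of_le h), Nat.sub_eq_zero_of_le h]
      simp

lemma qDiff_qBinom_of_lt (hq : ∀ m : ℕ, 0 < m → q ^ m ≠ 1) {K M : ℕ} (L : ℕ) (h : M < K) :
    qDiff q K (fun i => qBinom q (L + K - i) M) = 0 := by
  induction K generalizing L with
  | zero => exact absurd h M.not_lt_zero
  | succ K ih =>
    rw [qDiff_succ_qBinom hq]
    rcases Nat.lt_succ_iff_lt_or_eq.mp h with h | rfl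
    · rw [ih _ h, ih _ h, mul_zero, sub_zero]
    · have e := fun L => qDiff_qBinom_add hq M L 0
      simp only [add_zero, tsub_zero, qBinom_zero_right hq, one_mul] at e
      rw [e, e]
      ring

end QDifference

section GeneratingFunction

variable {F : Type*} [Field F] {q : F}

/-- The `q`-exponential generating function of a sequence. -/
noncomputable def qgf (q : F) (u : ℕ → F) : PowerSeries F :=
  PowerSeries.mk fun n => u n / qFact q n

lemma qgf_injective (hq : ∀ m : ℕ, 0 < m → q ^ m ≠ 1) : Function.Injective (qgf q) := by
  intro u v h
  funext n
  have := congrArg (PowerSeries.coeff n) h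
  simpa [qgf, div_left_inj' (qFact_ne_zero hq n)] using this

lemma qgf_mul (hq : ∀ m : ℕ, 0 < m → q ^ m ≠ 1) (u v : ℕ → F) :
    qgf q u * qgf q v =
      qgf q (fun n => ∑ i ∈ range (n + 1), qBinom q n i * u i * v (n - i)) := by
  ext n
  rw [PowerSeries.coeff_mul, Finset.Nat.sum_antidiagonal_eq_sum_range_succ_mk]
  simp only [qgf, PowerSeries.coeff_mk, sum_div]
  refine sum_congr rfl fun i hi => ?_
  obtain ⟨r, rfl⟩ := Nat.exists_eq_add_of_le (Nat.lt_succ_iff.mp (mem_range.mp hi))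
  rw [qBinom_add_eq_qFact hq, Nat.add_sub_cancel_left]
  have := qFact_ne_zero hq i
  have := qFact_ne_zero hq r
  have := qFact_ne_zero hq (i + r)
  field_simp

lemma rescale_qgf (c : F) (u : ℕ → F) :
    PowerSeries.rescale c (qgf q u) = qgf q (fun n => c ^ n * u n) := by
  ext n
  simp [qgf, PowerSeries.coeff_rescale, mul_div_assoc]

lemma qgf_qDual (hq : ∀ m : ℕ, 0 < m → q ^ m ≠ 1) (a : ℕ → F) :
    qgf q (qDual q a) =
      qgf q (fun i => (-1) ^ i * q ^ (i.choose 2) * a i) * qgf q (fun _ => 1) := by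
  rw [qgf_mul hq]
  congr 1
  funext n
  exact sum_congr rfl fun i _ => by ring

lemma qgf_AstarPoly (hq : ∀ m : ℕ, 0 < m → q ^ m ≠ 1) (a : ℕ → F) (z : F) :
    qgf q (fun n => AstarPoly q a n z) =
      qgf q (fun i => (-1) ^ i * qDual q a i) * qgf q (fun n => z ^ n) := by
  rw [qgf_mul hq]
  congr 1
  funext n
  exact sum_congr rfl fun i _ => by ring

lemma qgf_qBracket3 (hq : ∀ m : ℕ, 0 < m → q ^ m ≠ 1) (u v w : F) :
    qgf q (fun n => qBracket3 q n u v w) =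
      qgf q (fun n => u ^ n) * (qgf q (fun n => v ^ n) * qgf q (fun n => w ^ n)) := by
  rw [qgf_mul hq, qgf_mul hq]
  congr 1
  funext n
  refine sum_congr rfl fun i hi => ?_
  obtain ⟨r, rfl⟩ := Nat.exists_eq_add_of_le (Nat.lt_succ_iff.mp (mem_range.mp hi))
  rw [show i + r + 1 - i = r + 1 by omega, Nat.add_sub_cancel_left, mul_sum]
  refine sum_congr rfl fun j hj => ?_
  obtain ⟨s, rfl⟩ := Nat.exists_eq_add_of_le (Nat.lt_succ_iff.mp (mem_range.mp hj))
  rw [Nat.add_sub_cancel_left, qBinom_add_eq_qFact hq, qBinom_add_eq_qFact hq]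
  have := qFact_ne_zero hq i
  have := qFact_ne_zero hq j
  have := qFact_ne_zero hq s
  have := qFact_ne_zero hq (j + s)
  field_simp

lemma qgf_ApolyTri (hq : ∀ m : ℕ, 0 < m → q ^ m ≠ 1) (a : ℕ → F) (z x : F) :
    qgf q (fun n => ApolyTri q a n z x) =
      qgf q (fun i => (-1) ^ i * q ^ (i.choose 2) * a i) *
        qgf q (fun n => qBracket3 q n 1 (-z) (-x)) := by
  rw [qgf_mul hq]
  congr 1
  funext n
  exact sum_congr rfl fun i _ => by ring

lemma ApolyTri_eq_sum_AstarPoly (hq : ∀ m : ℕ, 0 < m → q ^ m ≠ 1) (a : ℕ → F) (n : ℕ) (z x : F) :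
    ApolyTri q a n z x = ∑ i ∈ range (n + 1),
      qBinom q n i * ((-1) ^ i * AstarPoly q a i z) * (-x) ^ (n - i) := by
  suffices h : qgf q (fun n => ApolyTri q a n z x) = qgf q (fun n => ∑ i ∈ range (n + 1),
      qBinom q n i * ((-1) ^ i * AstarPoly q a i z) * (-x) ^ (n - i)) from
    congrFun (qgf_injective hq h) n
  rw [← qgf_mul hq (fun i => (-1) ^ i * AstarPoly q a i z) (fun n => (-x) ^ n),
    ← rescale_qgf, qgf_AstarPoly hq, map_mul, rescale_qgf, rescale_qgf, qgf_ApolyTri hq,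
    qgf_qBracket3 hq]
  simp only [← mul_assoc, ← mul_pow, neg_one_mul, neg_neg, one_pow, one_mul]
  rw [qgf_qDual hq]

end GeneratingFunction

lemma sum_qBinom_mul_qBinom {F : Type*} [Field F] {q : F} (hq0 : q ≠ 0)
    (hq : ∀ m : ℕ, 0 < m → q ^ m ≠ 1) (k l m : ℕ) (x : F) :
    ∑ j ∈ range (k + 2), qBinom q (k + 1) j * x ^ (k + 1 - j) * qInt q (l + j + 1) *
        (qBinom q (l + j) m * (-x) ^ (l + j - m)) *
        q ^ ((((k : ℤ) - j) * ((k : ℤ) - j - 1)) / 2 - (j : ℤ)) =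
      x ^ (k + l + 1 - m) * (-1) ^ (k + 1 + l + m) * qInt q (m + 1) * q ^ (-(k : ℤ)) *
        qDiff q (k + 1) (fun i => qBinom q (l + 1 + (k + 1) - i) (m + 1)) := by
  rw [← sum_range_reflect, qDiff, mul_sum]
  refine sum_congr rfl fun i hi => ?_
  obtain ⟨j, hj⟩ := Nat.exists_eq_add_of_le (Nat.lt_succ_iff.mp (mem_range.mp hi))
  have e : (((k : ℤ) - j) * ((k : ℤ) - j - 1)) / 2 - (j : ℤ) = -(k : ℤ) + (i.choose 2 : ℕ) := by
    have hc : (i.choose 2 : ℤ) * 2 = i * (i - 1) := by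
      have := Nat.choose_two_right i
      have h2 := Nat.div_mul_cancel (Nat.even_mul_pred_self i).two_dvd
      rw [← this] at h2
      rcases i with _ | i
      · simp
      · simp at h2 ⊢
        exact_mod_cast h2
    have hk : (k : ℤ) = i + j - 1 := by omega
    have : ((k : ℤ) - j) * ((k : ℤ) - j - 1) = (-(k : ℤ) + (i.choose 2 : ℕ) + j) * 2 := by
      rw [hk]
      linear_combination -hc
    rw [this, Int.mul_ediv_cancel _ two_ne_zero]
    ring
  rw [show k + 2 - 1 - i = j by omega, show k + 1 - j = i by omega, e, zpow_add₀ hq0, zpow_natCast,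
    show l + 1 + (k + 1) - i = l + j + 1 by omega, hj, qBinom_symm_add]
  rcases lt_or_ge (l + j) m with h | h
  · rw [qBinom_of_lt h, qBinom_of_lt (Nat.succ_lt_succ h)]
    ring
  · obtain ⟨s, hs⟩ := Nat.exists_eq_add_of_le h
    have hb := qInt_mul_qBinom hq (l + j) m
    have hsign : (-1 : F) ^ (i + j + l + m) * (-1) ^ i = (-1) ^ s := by
      rw [← pow_add, show i + j + l + m + i = 2 * (i + m) + s by omega, pow_add, pow_mul]
      simp
    rw [show l + j - m = s by omega, show k + l + 1 - m = i + s by omega, neg_pow x s, ← hsign]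
    linear_combination (qBinom q (i + j) j * x ^ (i + s) * (-1 : F) ^ (i + j + l + m) * (-1) ^ i *
      q ^ (-(k : ℤ)) * q ^ (i.choose 2)) * hb

theorem stmt5 {F : Type*} [Field F] (q : F) (hq0 : q ≠ 0)
    (hq : ∀ m : ℕ, 0 < m → q ^ m ≠ 1) (a : ℕ → F) (k l : ℕ) (x z : F) :
    (-1 : F) ^ (l + 1) * ∑ j ∈ Finset.range (l + 2), qBinom q (l + 1) j *
        x ^ (l + 1 - j) * qInt q (k + j + 1) * AstarPoly q a (k + j) z *
        q ^ (((k : ℤ) + 1) * ((l : ℤ) - j) + 1) =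
    (-1 : F) ^ k * ∑ j ∈ Finset.range (k + 2), qBinom q (k + 1) j *
        x ^ (k + 1 - j) * qInt q (l + j + 1) * ApolyTri q a (l + j) z x *
        q ^ ((((k : ℤ) - j) * ((k : ℤ) - j - 1)) / 2 - (j : ℤ)) := by
  have hR : ∀ j ∈ range (k + 2), qBinom q (k + 1) j * x ^ (k + 1 - j) * qInt q (l + j + 1) *
      ApolyTri q a (l + j) z x * q ^ ((((k : ℤ) - j) * ((k : ℤ) - j - 1)) / 2 - (j : ℤ)) =
      ∑ m ∈ range (k + (l + 2)), (-1) ^ m * AstarPoly q a m z *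
        (qBinom q (k + 1) j * x ^ (k + 1 - j) * qInt q (l + j + 1) *
          (qBinom q (l + j) m * (-x) ^ (l + j - m)) *
          q ^ ((((k : ℤ) - j) * ((k : ℤ) - j - 1)) / 2 - (j : ℤ))) := by
    intro j hj
    have hjk := mem_range.mp hj
    rw [ApolyTri_eq_sum_AstarPoly hq, mul_sum, sum_mul]
    refine (sum_congr rfl fun i _ => ?_).trans
      (sum_subset (range_mono (by omega : l + j + 1 ≤ k + (l + 2))) fun i _ hi => ?_)
    · ring
    · rw [qBinom_of_lt (by simpa using hi : l + j < i)]
      ring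
  rw [sum_congr rfl hR, sum_comm]
  simp only [← mul_sum, sum_qBinom_mul_qBinom hq0 hq]
  rw [sum_range_add _ k (l + 2), sum_eq_zero (s := range k) fun m hm => by
      rw [qDiff_qBinom_of_lt hq _ (Nat.succ_lt_succ (mem_range.mp hm)), mul_zero, mul_zero],
    zero_add, mul_sum, mul_sum]
  refine sum_congr rfl fun j hj => ?_
  obtain ⟨r, hr⟩ := Nat.exists_eq_add_of_le (Nat.lt_succ_iff.mp (mem_range.mp hj))
  rw [show k + j + 1 = k + 1 + j by ring, qDiff_qBinom_add hq, show l + 1 - j = r by omega,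
    show k + l + 1 - (k + j) = r by omega,
    show ((k : ℤ) + 1) * ((l : ℤ) - j) + 1 = -(k : ℤ) + ((k + 1) * r : ℕ) by
      push_cast
      rw [show (l : ℤ) = j + r - 1 by omega]
      ring,
    zpow_add₀ hq0, zpow_natCast]
  have hsign : (-1 : F) ^ k * (-1) ^ (k + j) * (-1) ^ (k + 1 + l + (k + j)) = (-1) ^ (l + 1) := by
    rw [← pow_add, ← pow_add,
      show k + (k + j) + (k + 1 + l + (k + j)) = 2 * (2 * k + j) + (l + 1) by ring, pow_add,
      pow_mul]
    simp
  rw [← hsign]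
  ring
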